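/- Every finite 3-regular Hamiltonian bipartite simple graph admits a string contact representation in ℝ³ in which all strings except at most one are B₁-strings (L-shapes). -/

import Mathlib

open Set

/-- Points of ℝ³, identified with triples of real numbers. -/
abbrev Pt3 : Type := Fin 3 → ℝ

/-- A vector is parallel to a coordinate axis if at most one of its
three coordinates is nonzero. -/
def AxisParallel (v : Pt3) : Prop := ∃ i : Fin 3, ∀ j : Fin 3, j ≠ i → v j = 0

/-- An axis-aligned string in ℝ³: a simple polygonal path `pts 0, pts 1, …, pts k`
(`k ≥ 1`) with consecutive points distinct, each difference parallel to a coordinate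
axis, and the path non-self-intersecting (consecutive segments meet exactly at their
common endpoint and non-consecutive segments are disjoint). -/
structure AAString where
  k : ℕ
  pts : Fin (k + 1) → Pt3
  k_pos : 1 ≤ k
  consec_ne : ∀ i : Fin k, pts i.castSucc ≠ pts i.succ
  axis : ∀ i : Fin k, AxisParallel (pts i.succ - pts i.castSucc)
  simple_consec : ∀ i j : Fin k, (i : ℕ) + 1 = (j : ℕ) →
    segment ℝ (pts i.castSucc) (pts i.succ) ∩ segment ℝ (pts j.castSucc) (pts j.succ)
      = {pts i.succ}
  simple_far : ∀ i j : Fin k, (i : ℕ) + 1 < (j : ℕ) →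
    segment ℝ (pts i.castSucc) (pts i.succ) ∩ segment ℝ (pts j.castSucc) (pts j.succ) = ∅

/-- The string, as a subset of ℝ³: the union of its closed segments. -/
def AAString.carrier (S : AAString) : Set Pt3 :=
  ⋃ i : Fin S.k, segment ℝ (S.pts i.castSucc) (S.pts i.succ)

/-- The two endpoints of the string. -/
def AAString.endpoints (S : AAString) : Set Pt3 := {S.pts 0, S.pts (Fin.last S.k)}

/-- The number of bends of the string: one less than its number of segments. -/
def AAString.bends (S : AAString) : ℕ := S.k - 1

/-- A string contact representation of a simple graph `G`: two distinct strings meet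
only at endpoints of one of them, no point lies on three distinct strings, and two
strings intersect iff the corresponding vertices are adjacent. -/
def IsStringContactRep {V : Type*} (G : SimpleGraph V) (Ψ : V → AAString) : Prop :=
  (∀ u v : V, u ≠ v → ∀ p ∈ (Ψ u).carrier ∩ (Ψ v).carrier,
      p ∈ (Ψ u).endpoints ∪ (Ψ v).endpoints) ∧
  (∀ u v w : V, u ≠ v → u ≠ w → v ≠ w →
      ∀ p : Pt3, ¬ (p ∈ (Ψ u).carrier ∧ p ∈ (Ψ v).carrier ∧ p ∈ (Ψ w).carrier)) ∧
  (∀ u v : V, u ≠ v → (((Ψ u).carrier ∩ (Ψ v).carrier).Nonempty ↔ G.Adj u v))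


/-!
Number the vertices `0, …, n - 1` along the Hamiltonian cycle; the remaining edges are chords
`{k, p k}`, at most one at each vertex, and by bipartiteness they join even to odd numbers. String
`k` lies in a plane `x = x_k` for even `k` and in a plane `z = x_k` for odd `k`. It starts on string
`k - 1`, rises or descends to the height `min k (p k)`, and continues horizontally across the planes
of strings `k + 1` and `p k`, ending on string `p k` if that is an earlier one. Heights of different
horizontal parts agree exactly for the two ends of a chord, and those of consecutive strings differ,
so the strings meet only as intended. What remains is that the horizontal part of string `k` reaches
string `k + 1` before it ends. This holds if `x_k` is a partial sum of a series `∑ ± 3⁻ⁱ`: the sign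
of a term is the side on which all later planes lie, and choosing opposite signs for `k - 1` and
`p k` places all later planes between those two. Only the edge `{n - 1, 0}` is left, and it is
realised by a detour of string `0` around all other strings.
-/

section Zigzag

/-- Signs along the parent function `f`: an index gets the sign opposite to that of its parent
`f k`, where only parents `f k < k` count, and roots are positive. -/
def oppositeSign (f : ℕ → ℕ) (k : ℕ) : ℤˣ :=
  if _h : f k < k then -oppositeSign f (f k) else 1
termination_by k

lemma oppositeSign_of_lt {f : ℕ → ℕ} {k : ℕ} (h : f k < k) :
    oppositeSign f k = -oppositeSign f (f k) := by
  rw [oppositeSign, dif_pos h]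

/-- Partial sums of the signed geometric series `∑ ± 3⁻ⁱ`. Each step outweighs all later ones
together, so `ε i` is the side of `zigzag ε i` on which all later partial sums lie. -/
noncomputable def zigzag (ε : ℕ → ℤˣ) (l : ℕ) : ℝ :=
  ∑ i ∈ Finset.range l, (ε i : ℤ) * (1 / 3 : ℝ) ^ i

variable {ε : ℕ → ℤˣ} {i j l : ℕ}

lemma zigzag_succ (ε : ℕ → ℤˣ) (l : ℕ) :
    zigzag ε (l + 1) = zigzag ε l + (ε l : ℤ) * (1 / 3 : ℝ) ^ l :=
  Finset.sum_range_succ _ _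

lemma abs_zigzag_sub_le (ε : ℕ → ℤˣ) (h : i ≤ l) :
    |zigzag ε l - zigzag ε i| ≤ 3 / 2 * (1 / 3) ^ i := by
  have abs_sign (m : ℕ) : |((ε m : ℤ) : ℝ)| = 1 := by
    rcases Int.units_eq_one_or (ε m) with h | h <;> simp [h]
  calc |zigzag ε l - zigzag ε i|
      = |∑ m ∈ Finset.Ico i l, (ε m : ℤ) * (1 / 3 : ℝ) ^ m| := by
        rw [Finset.sum_Ico_eq_sub _ h]; rfl
    _ ≤ ∑ m ∈ Finset.Ico i l, |(ε m : ℤ) * (1 / 3 : ℝ) ^ m| := Finset.abs_sum_le_sum_abs _ _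
    _ = ∑ m ∈ Finset.Ico i l, (1 / 3 : ℝ) ^ m := by simp [abs_mul, abs_sign]
    _ ≤ (1 / 3) ^ i / (1 - 1 / 3) := geom_sum_Ico_le_of_lt_one (by norm_num) (by norm_num)
    _ = 3 / 2 * (1 / 3) ^ i := by ring

lemma abs_zigzag_lt_two (ε : ℕ → ℤˣ) (l : ℕ) : |zigzag ε l| < 2 := by
  have := abs_zigzag_sub_le ε (Nat.zero_le l)
  simp only [zigzag, Finset.range_zero, Finset.sum_empty, sub_zero, pow_zero] at this ⊢
  linarith

lemma sign_mul_zigzag_sub_pos (ε : ℕ → ℤˣ) (h : i < l) :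
    0 < (ε i : ℤ) * (zigzag ε l - zigzag ε i) := by
  have tail := abs_le.1 (abs_zigzag_sub_le ε (Nat.succ_le_of_lt h))
  rw [Nat.succ_eq_add_one, zigzag_succ, pow_succ] at tail
  have step : (0 : ℝ) < (1 / 3) ^ i := by positivity
  rcases Int.units_eq_one_or (ε i) with hε | hε <;>
    simp only [hε, Units.val_one, Units.val_neg, Int.cast_one, Int.cast_neg] at tail ⊢ <;>
    linarith

lemma zigzag_injective (ε : ℕ → ℤˣ) : Function.Injective (zigzag ε) := by
  refine .of_lt_imp_ne fun i l h heq => ?_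
  simpa [heq] using sign_mul_zigzag_sub_pos ε h

lemma zigzag_mem_uIcc_sign (ε : ℕ → ℤˣ) (h : i < l) :
    zigzag ε l ∈ uIcc (zigzag ε i) (2 * (ε i : ℤ)) := by
  have side := sign_mul_zigzag_sub_pos ε h
  have bound := abs_lt.1 (abs_zigzag_lt_two ε l)
  rw [mem_uIcc]
  rcases Int.units_eq_one_or (ε i) with hε | hε <;>
    simp only [hε, Units.val_one, Units.val_neg, Int.cast_one, Int.cast_neg] at side ⊢
  · left; constructor <;> linarith
  · right; constructor <;> linarith

lemma zigzag_mem_uIcc_of_sign_eq_neg (hε : ε i = -ε j) (hi : i < l) (hj : j < l) :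
    zigzag ε l ∈ uIcc (zigzag ε i) (zigzag ε j) := by
  have side_i := sign_mul_zigzag_sub_pos ε hi
  have side_j := sign_mul_zigzag_sub_pos ε hj
  rw [mem_uIcc]
  rcases Int.units_eq_one_or (ε j) with h | h <;>
    simp only [hε, h, neg_neg, Units.val_one, Units.val_neg, Int.cast_one, Int.cast_neg]
      at side_i side_j
  · right; constructor <;> linarith
  · left; constructor <;> linarith

end Zigzag

section Frame

lemma mem_segment_iff_of_forall_ne {𝕜 ι : Type*} [Field 𝕜] [LinearOrder 𝕜]
    [IsStrictOrderedRing 𝕜] {a b q : ι → 𝕜} {i : ι} (h : ∀ j ≠ i, a j = b j) :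
    q ∈ segment 𝕜 a b ↔ q i ∈ uIcc (a i) (b i) ∧ ∀ j ≠ i, q j = a j := by
  classical
  have hb : Function.update a i (b i) = b := by
    ext j; rcases eq_or_ne j i with rfl | hj <;> simp [*]
  have hseg : segment 𝕜 a b = Function.update a i '' uIcc (a i) (b i) := by
    rw [← segment_eq_uIcc, Pi.image_update_segment, Function.update_eq_self, hb]
  rw [hseg]
  constructor
  · rintro ⟨t, ht, rfl⟩
    exact ⟨by simpa using ht, fun j hj => by simp [hj]⟩
  · rintro ⟨hi, hne⟩
    refine ⟨q i, hi, ?_⟩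
    ext j; rcases eq_or_ne j i with rfl | hj <;> simp [*]

/-- The coordinate axis orthogonal to the plane of the `k`-th string: the planes alternate between
`x = const` and `z = const`, so that axis `1` and `normalAxis (k + 1)` span the `k`-th plane. -/
def normalAxis (k : ℕ) : Fin 3 := if Even k then 0 else 2

/-- The point with coordinate `u` along `normalAxis k`, height `y` (along axis `1`), and coordinate
`v` along `normalAxis (k + 1)`. -/
def framePt (k : ℕ) (u y v : ℝ) : Pt3 := if Even k then ![u, y, v] else ![v, y, u]

variable {k l : ℕ} {u u' y y' v v' : ℝ} {q : Pt3}

lemma normalAxis_congr (h : Even (k + l)) : normalAxis k = normalAxis l := by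
  simp [normalAxis, Nat.even_add.1 h]

lemma normalAxis_add_one_ne (k : ℕ) : normalAxis (k + 1) ≠ normalAxis k := by
  by_cases h : Even k <;> simp [normalAxis, Nat.even_add_one, h]

lemma normalAxis_ne_one (k : ℕ) : normalAxis k ≠ 1 := by
  by_cases h : Even k <;> simp [normalAxis, h]

lemma forall_axis_iff (k : ℕ) (P : Fin 3 → Prop) :
    (∀ i, P i) ↔ P (normalAxis k) ∧ P 1 ∧ P (normalAxis (k + 1)) := by
  have hP : (∀ i, P i) ↔ P 0 ∧ P 1 ∧ P 2 := by simp [Fin.forall_fin_succ]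
  by_cases h : Even k <;> simp [hP, normalAxis, Nat.even_add_one, h, and_comm, and_assoc]

@[simp] lemma framePt_normalAxis : framePt k u y v (normalAxis k) = u := by
  by_cases h : Even k <;> simp [framePt, normalAxis, h]

@[simp] lemma framePt_one : framePt k u y v 1 = y := by
  by_cases h : Even k <;> simp [framePt, h]

@[simp] lemma framePt_normalAxis_succ : framePt k u y v (normalAxis (k + 1)) = v := by
  by_cases h : Even k <;> simp [framePt, normalAxis, Nat.even_add_one, h]

lemma eq_framePt_iff :
    q = framePt k u y v ↔ q (normalAxis k) = u ∧ q 1 = y ∧ q (normalAxis (k + 1)) = v := by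
  rw [funext_iff, forall_axis_iff k]
  simp

lemma mem_segment_framePt_normal : q ∈ segment ℝ (framePt k u y v) (framePt k u' y v) ↔
    q (normalAxis k) ∈ uIcc u u' ∧ q 1 = y ∧ q (normalAxis (k + 1)) = v := by
  rw [mem_segment_iff_of_forall_ne (i := normalAxis k), forall_axis_iff k]
  · simp [normalAxis_add_one_ne, (normalAxis_ne_one k).symm]
  · rw [forall_axis_iff k]; simp

lemma mem_segment_framePt_height : q ∈ segment ℝ (framePt k u y v) (framePt k u y' v) ↔
    q (normalAxis k) = u ∧ q 1 ∈ uIcc y y' ∧ q (normalAxis (k + 1)) = v := by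
  rw [mem_segment_iff_of_forall_ne (i := 1), forall_axis_iff k]
  · simp [normalAxis_ne_one, and_left_comm]
  · rw [forall_axis_iff k]; simp

lemma mem_segment_framePt_along : q ∈ segment ℝ (framePt k u y v) (framePt k u y v') ↔
    q (normalAxis k) = u ∧ q 1 = y ∧ q (normalAxis (k + 1)) ∈ uIcc v v' := by
  rw [mem_segment_iff_of_forall_ne (i := normalAxis (k + 1)), forall_axis_iff k]
  · simp [(normalAxis_add_one_ne k).symm, (normalAxis_ne_one _).symm, and_assoc,
      and_comm (a := _ ∈ uIcc _ _)]
  · rw [forall_axis_iff k]; simp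

lemma axisParallel_framePt_normal : AxisParallel (framePt k u' y v - framePt k u y v) :=
  ⟨normalAxis k, (forall_axis_iff k _).2 (by simp)⟩

lemma axisParallel_framePt_height : AxisParallel (framePt k u y' v - framePt k u y v) :=
  ⟨1, (forall_axis_iff k _).2 (by simp)⟩

lemma axisParallel_framePt_along : AxisParallel (framePt k u y v' - framePt k u y v) :=
  ⟨normalAxis (k + 1), (forall_axis_iff k _).2 (by simp)⟩

end Frame

section Snoc

namespace AAString

/-- The string consisting of the single segment from `a` to `b`. -/
def single (a b : Pt3) (hne : a ≠ b) (hax : AxisParallel (b - a)) : AAString where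
  k := 1
  pts := ![a, b]
  k_pos := le_rfl
  consec_ne i := by simpa [Fin.fin_one_eq_zero i] using hne
  axis i := by simpa [Fin.fin_one_eq_zero i] using hax
  simple_consec i j hij := by omega
  simple_far i j hij := by omega

variable (S : AAString)

lemma eq_last_of_pts_last_mem_segment {i : Fin S.k}
    (h : S.pts (Fin.last S.k) ∈ segment ℝ (S.pts i.castSucc) (S.pts i.succ)) :
    i.succ = Fin.last S.k := by
  obtain ⟨m, hm⟩ : ∃ m, S.k = m + 1 := ⟨S.k - 1, (Nat.sub_add_cancel S.k_pos).symm⟩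
  set e : Fin S.k := ⟨m, by omega⟩
  have he : e.succ = Fin.last S.k := Fin.ext hm.symm
  have mem_e : S.pts (Fin.last S.k) ∈ segment ℝ (S.pts e.castSucc) (S.pts e.succ) := by
    rw [← he]; exact right_mem_segment _ _ _
  by_contra hi
  have hie : (i : ℕ) < m := by
    have : (i.succ : ℕ) ≠ S.k := fun h => hi (Fin.ext h)
    simp only [Fin.val_succ] at this
    omega
  rcases (Nat.succ_le_of_lt hie).eq_or_lt with heq | hlt
  · have hlast : S.pts (Fin.last S.k) = S.pts i.succ :=
      (S.simple_consec i e heq).subset ⟨h, mem_e⟩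
    have hsucc : i.succ = e.castSucc := Fin.ext heq
    exact S.consec_ne e (by rw [he, hlast, hsucc])
  · exact (S.simple_far i e hlt).subset ⟨h, mem_e⟩

/-- The string `S` continued by the segment from its last point to `b`. -/
def snoc (b : Pt3) (hne : S.pts (Fin.last S.k) ≠ b) (hax : AxisParallel (b - S.pts (Fin.last S.k)))
    (hcap : S.carrier ∩ segment ℝ (S.pts (Fin.last S.k)) b ⊆ {S.pts (Fin.last S.k)}) :
    AAString where
  k := S.k + 1
  pts := Fin.snoc (α := fun _ => Pt3) S.pts b
  k_pos := Nat.le_add_left _ _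
  consec_ne i := by
    induction i using Fin.lastCases with
    | last => simpa using hne
    | cast i => simpa [← Fin.castSucc_succ] using S.consec_ne i
  axis i := by
    induction i using Fin.lastCases with
    | last => simpa using hax
    | cast i => simpa [← Fin.castSucc_succ] using S.axis i
  simple_consec i j hij := by
    induction i using Fin.lastCases with
    | last =>
      simp only [Fin.val_last] at hij
      omega
    | cast i =>
      induction j using Fin.lastCases with
      | last =>
        have hi : i.succ = Fin.last S.k := Fin.ext hij
        simp only [← Fin.castSucc_succ, Fin.snoc_castSucc, Fin.succ_last, Fin.snoc_last, hi]
        refine Subset.antisymm ?_ (singleton_subset_iff.2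
          ⟨right_mem_segment _ _ _, left_mem_segment _ _ _⟩)
        rw [← hi] at hcap ⊢
        exact (inter_subset_inter_left _ (subset_iUnion_of_subset i Subset.rfl)).trans hcap
      | cast j => simpa [← Fin.castSucc_succ] using S.simple_consec i j hij
  simple_far i j hij := by
    induction i using Fin.lastCases with
    | last =>
      simp only [Fin.val_last] at hij
      omega
    | cast i =>
      induction j using Fin.lastCases with
      | last =>
        simp only [← Fin.castSucc_succ, Fin.snoc_castSucc, Fin.succ_last, Fin.snoc_last]
        refine eq_empty_of_forall_notMem fun q hq => ?_
        obtain rfl := hcap ⟨mem_iUnion_of_mem i hq.1, hq.2⟩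
        have := S.eq_last_of_pts_last_mem_segment hq.1
        simp only [Fin.ext_iff, Fin.val_succ, Fin.val_last, Fin.val_castSucc] at this hij
        omega
      | cast j => simpa [← Fin.castSucc_succ] using S.simple_far i j hij

lemma carrier_snoc (b : Pt3) (hne hax hcap) :
    (S.snoc b hne hax hcap).carrier = S.carrier ∪ segment ℝ (S.pts (Fin.last S.k)) b := by
  ext q
  simp [carrier, snoc, Fin.exists_fin_succ', ← Fin.castSucc_succ]

end AAString

/-- `IsStringTrace X a b m` says that the point set `X` is traced out by an axis-aligned string from
`a` to `b` with `m` bends. -/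
def IsStringTrace (X : Set Pt3) (a b : Pt3) (m : ℕ) : Prop :=
  ∃ S : AAString, S.carrier = X ∧ S.pts 0 = a ∧ S.pts (Fin.last S.k) = b ∧ S.bends = m

lemma isStringTrace_segment {a b : Pt3} (hne : a ≠ b) (hax : AxisParallel (b - a)) :
    IsStringTrace (segment ℝ a b) a b 0 :=
  ⟨.single a b hne hax, ciSup_unique (ι := Fin 1), rfl, rfl, rfl⟩

lemma IsStringTrace.union_segment {X : Set Pt3} {a b c : Pt3} {m : ℕ} (h : IsStringTrace X a b m)
    (hne : b ≠ c) (hax : AxisParallel (c - b)) (hcap : X ∩ segment ℝ b c ⊆ {b}) :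
    IsStringTrace (X ∪ segment ℝ b c) a c (m + 1) := by
  obtain ⟨S, rfl, rfl, rfl, rfl⟩ := h
  refine ⟨S.snoc c hne hax hcap, S.carrier_snoc c hne hax hcap, ?_,
    Fin.snoc_last (α := fun _ => Pt3) c S.pts, ?_⟩
  · exact Fin.snoc_castSucc (α := fun _ => Pt3) c S.pts 0
  · exact (Nat.sub_add_cancel S.k_pos).symm

end Snoc

section Strings

/-- The involution `p` describes chords `{k, p k}`, with `p k = k` if there is none at `k`, which
together with the `n`-cycle `0, 1, …, n - 1` form a bipartite graph: `n` is even, each chord joins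
an even and an odd number, and no chord is an edge of the cycle. To avoid side conditions, `p` is
defined on all of `ℕ`. -/
structure IsChordPairing (n : ℕ) (p : ℕ → ℕ) : Prop where
  even : Even n
  pos : 0 < n
  involutive : Function.Involutive p
  odd_add : ∀ k, p k ≠ k → Odd (k + p k)
  ne_succ : ∀ k, p k ≠ k + 1
  zero_ne : p 0 ≠ n - 1

/-- Adjacency between vertices `k < l` of the `n`-cycle `0, 1, …, n - 1` with chords `{k, p k}`. -/
def ChordAdj (n : ℕ) (p : ℕ → ℕ) (k l : ℕ) : Prop :=
  l = k + 1 ∨ l = p k ∨ k = 0 ∧ l = n - 1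

/-- The side of `planeCoord p k` on which all later planes lie. String `k + 1` starts in the plane
of string `k`; if it ends on an earlier string `p (k + 1)`, then all later planes must lie between
those of `k` and `p (k + 1)`, so that the two sides are opposite. -/
def laterSide (p : ℕ → ℕ) : ℕ → ℤˣ := oppositeSign fun k => p (k + 1)

/-- The `k`-th string (up to a detour of string `0`) lies in the plane where the coordinate along
`normalAxis k` equals `planeCoord p k`. -/
noncomputable def planeCoord (p : ℕ → ℕ) : ℕ → ℝ := zigzag (laterSide p)

/-- The height of the horizontal part of the `k`-th string, shared exactly with its chord
partner. -/
def beamLevel (p : ℕ → ℕ) (k : ℕ) : ℝ := (min k (p k) : ℕ)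

/-- The position at which the horizontal part of the `k`-th string starts: the plane of its
predecessor. String `0` starts before all planes. -/
noncomputable def beamNear (p : ℕ → ℕ) : ℕ → ℝ
  | 0 => -2
  | k + 1 => planeCoord p k

/-- The position at which the horizontal part of the `k`-th string stops: the plane of its chord
partner if that is an earlier string, and beyond all later planes otherwise. -/
noncomputable def beamFar (p : ℕ → ℕ) : ℕ → ℝ
  | 0 => 3
  | k + 1 => if p (k + 1) < k then planeCoord p (p (k + 1)) else 2 * (laterSide p k : ℤ)

/-- The positions, along `normalAxis (k + 1)`, covered by the horizontal part of the `k`-th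
string. -/
def beamSpan (p : ℕ → ℕ) (k : ℕ) : Set ℝ := uIcc (beamNear p k) (beamFar p k)

/-- The horizontal part of the `k`-th string (without the detour if `k = 0`). -/
def beam (p : ℕ → ℕ) (k : ℕ) : Set Pt3 :=
  segment ℝ (framePt k (planeCoord p k) (beamLevel p k) (beamNear p k))
    (framePt k (planeCoord p k) (beamLevel p k) (beamFar p k))

/-- The vertical part of the `k + 1`-st string, starting on the beam of the `k`-th one. -/
def riser (p : ℕ → ℕ) (k : ℕ) : Set Pt3 :=
  segment ℝ (framePt (k + 1) (planeCoord p (k + 1)) (beamLevel p k) (planeCoord p k))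
    (framePt (k + 1) (planeCoord p (k + 1)) (beamLevel p (k + 1)) (planeCoord p k))

/-- The path in the planes `z = 3` and `x = planeCoord p n`, away from all strings, along which
string `0` is continued from the end of its beam to string `n - 1`. -/
def detour (p : ℕ → ℕ) (n : ℕ) : Set Pt3 :=
  segment ℝ (framePt 0 (planeCoord p 0) (beamLevel p 0) 3)
    (framePt 0 (planeCoord p n) (beamLevel p 0) 3) ∪
  segment ℝ (framePt 0 (planeCoord p n) (beamLevel p 0) 3)
    (framePt 0 (planeCoord p n) (beamLevel p (n - 1)) 3) ∪
  segment ℝ (framePt 0 (planeCoord p n) (beamLevel p (n - 1)) 3)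
    (framePt 0 (planeCoord p n) (beamLevel p (n - 1)) (planeCoord p (n - 1)))

/-- The point set of the `k`-th string representing the `n`-cycle with chords `{k, p k}`. -/
def stringTrace (p : ℕ → ℕ) (n : ℕ) : ℕ → Set Pt3
  | 0 => beam p 0 ∪ detour p n
  | k + 1 => riser p k ∪ beam p (k + 1)

/-- The initial endpoint of the `k`-th string. -/
noncomputable def initialPt (p : ℕ → ℕ) : ℕ → Pt3
  | 0 => framePt 0 (planeCoord p 0) (beamLevel p 0) (beamNear p 0)
  | k + 1 => framePt (k + 1) (planeCoord p (k + 1)) (beamLevel p k) (planeCoord p k)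

/-- The final endpoint of the `k`-th string. -/
noncomputable def finalPt (p : ℕ → ℕ) (n : ℕ) : ℕ → Pt3
  | 0 => framePt 0 (planeCoord p n) (beamLevel p (n - 1)) (planeCoord p (n - 1))
  | k + 1 => framePt (k + 1) (planeCoord p (k + 1)) (beamLevel p (k + 1)) (beamFar p (k + 1))

variable {n k l : ℕ} {p : ℕ → ℕ} {q : Pt3}

lemma planeCoord_injective (p : ℕ → ℕ) : Function.Injective (planeCoord p) := zigzag_injective _

lemma abs_planeCoord_lt_two (p : ℕ → ℕ) (k : ℕ) : |planeCoord p k| < 2 := abs_zigzag_lt_two _ _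

lemma laterSide_of_lt (h : p (k + 1) < k) : laterSide p k = -laterSide p (p (k + 1)) :=
  oppositeSign_of_lt h

lemma lt_three_of_mem_beamSpan_succ {t : ℝ} (h : t ∈ beamSpan p (k + 1)) : t < 3 := by
  have hnear := (abs_lt.1 (abs_planeCoord_lt_two p k)).2
  have hfar : beamFar p (k + 1) ≤ 2 := by
    rw [beamFar]
    split_ifs
    · exact (abs_lt.1 (abs_planeCoord_lt_two p _)).2.le
    · rcases Int.units_eq_one_or (laterSide p k) with h | h <;> norm_num [h]
  have := h.2.trans (max_le hnear.le hfar)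
  linarith

lemma beamNear_ne_beamFar (p : ℕ → ℕ) (k : ℕ) : beamNear p k ≠ beamFar p k := by
  cases k with
  | zero => norm_num [beamNear, beamFar]
  | succ k =>
    rw [beamNear, beamFar]
    split_ifs with h
    · exact (planeCoord_injective p).ne h.ne'
    · intro heq
      have hlt := abs_planeCoord_lt_two p k
      rcases Int.units_eq_one_or (laterSide p k) with h | h <;> norm_num [heq, h] at hlt

lemma planeCoord_mem_beamSpan_zero (p : ℕ → ℕ) (l : ℕ) : planeCoord p l ∈ beamSpan p 0 := by
  have := abs_lt.1 (abs_planeCoord_lt_two p l)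
  rw [beamSpan, beamNear, beamFar, mem_uIcc]
  left; constructor <;> linarith

lemma planeCoord_succ_mem_beamSpan (p : ℕ → ℕ) (k : ℕ) : planeCoord p (k + 1) ∈ beamSpan p k := by
  cases k with
  | zero => exact planeCoord_mem_beamSpan_zero p 1
  | succ k =>
    rw [beamSpan, beamNear, beamFar]
    split_ifs with h
    · exact zigzag_mem_uIcc_of_sign_eq_neg (laterSide_of_lt h) (by omega) (by omega)
    · exact zigzag_mem_uIcc_sign _ (by omega)

lemma planeCoord_partner_mem_beamSpan (h : k < p k) : planeCoord p (p k) ∈ beamSpan p k := by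
  cases k with
  | zero => exact planeCoord_mem_beamSpan_zero p _
  | succ k =>
    rw [beamSpan, beamNear, beamFar, if_neg (by omega)]
    exact zigzag_mem_uIcc_sign _ (by omega)

lemma mem_beam : q ∈ beam p k ↔ q (normalAxis k) = planeCoord p k ∧ q 1 = beamLevel p k ∧
    q (normalAxis (k + 1)) ∈ beamSpan p k :=
  mem_segment_framePt_along

lemma mem_riser : q ∈ riser p k ↔ q (normalAxis (k + 1)) = planeCoord p (k + 1) ∧
    q 1 ∈ uIcc (beamLevel p k) (beamLevel p (k + 1)) ∧ q (normalAxis k) = planeCoord p k := by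
  rw [riser, mem_segment_framePt_height, normalAxis_congr (k := k + 1 + 1) (l := k) (by grind)]

lemma mem_detour : q ∈ detour p n ↔
    q 0 ∈ uIcc (planeCoord p 0) (planeCoord p n) ∧ q 1 = beamLevel p 0 ∧ q 2 = 3 ∨
    q 0 = planeCoord p n ∧ q 1 ∈ uIcc (beamLevel p 0) (beamLevel p (n - 1)) ∧ q 2 = 3 ∨
    q 0 = planeCoord p n ∧ q 1 = beamLevel p (n - 1) ∧ q 2 ∈ uIcc 3 (planeCoord p (n - 1)) := by
  rw [detour, mem_union, mem_union, mem_segment_framePt_normal, mem_segment_framePt_height,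
    mem_segment_framePt_along, or_assoc]
  rfl

lemma beam_subset_stringTrace (k : ℕ) : beam p k ⊆ stringTrace p n k := by
  cases k with
  | zero => exact subset_union_left
  | succ k => exact subset_union_right

lemma apply_normalAxis_of_mem_stringTrace_succ (h : q ∈ stringTrace p n (k + 1)) :
    q (normalAxis (k + 1)) = planeCoord p (k + 1) :=
  h.elim (fun h => (mem_riser.1 h).1) fun h => (mem_beam.1 h).1

lemma apply_normalAxis_lt_three_of_mem_stringTrace_succ (h : q ∈ stringTrace p n (k + 1)) (l : ℕ) :
    q (normalAxis l) < 3 := by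
  have planeCoord_lt (i : ℕ) : planeCoord p i < 3 := by
    have := (abs_lt.1 (abs_planeCoord_lt_two p i)).2
    linarith
  rcases Nat.even_or_odd (l + (k + 1)) with heven | hodd
  · rw [normalAxis_congr heven, apply_normalAxis_of_mem_stringTrace_succ h]
    exact planeCoord_lt _
  · rw [normalAxis_congr (l := k + 1 + 1) (by grind)]
    obtain hriser | hbeam := h
    · rw [normalAxis_congr (l := k) (by grind), (mem_riser.1 hriser).2.2]
      exact planeCoord_lt _
    · exact lt_three_of_mem_beamSpan_succ (mem_beam.1 hbeam).2.2

lemma eq_or_eq_succ_of_mem_riser (hq : q ∈ riser p k) (hl : q (normalAxis l) = planeCoord p l) :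
    l = k ∨ l = k + 1 := by
  obtain ⟨hsucc, -, hk⟩ := mem_riser.1 hq
  rcases Nat.even_or_odd (l + k) with heven | hodd
  · rw [normalAxis_congr heven, hk] at hl
    exact .inl (planeCoord_injective p hl.symm)
  · rw [normalAxis_congr (l := k + 1) (by grind), hsucc] at hl
    exact .inr (planeCoord_injective p hl.symm)

lemma eq_initialPt_of_mem_riser_of_mem_beam (hriser : q ∈ riser p k) (hbeam : q ∈ beam p k) :
    q = initialPt p (k + 1) := by
  obtain ⟨hsucc, -, hk⟩ := mem_riser.1 hriser
  rw [initialPt, eq_framePt_iff, normalAxis_congr (k := k + 1 + 1) (l := k) (by grind)]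
  exact ⟨hsucc, (mem_beam.1 hbeam).2.1, hk⟩

lemma initialPt_succ_mem_riser : initialPt p (k + 1) ∈ riser p k := left_mem_segment _ _ _

lemma initialPt_succ_mem_beam : initialPt p (k + 1) ∈ beam p k := by
  obtain ⟨hsucc, -, hk⟩ := mem_riser.1 (initialPt_succ_mem_riser (p := p) (k := k))
  exact mem_beam.2 ⟨hk, framePt_one, hsucc ▸ planeCoord_succ_mem_beamSpan p k⟩

lemma isStringTrace_stringTrace_succ (hlevel : beamLevel p k ≠ beamLevel p (k + 1)) :
    IsStringTrace (stringTrace p n (k + 1)) (initialPt p (k + 1)) (finalPt p n (k + 1)) 1 := by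
  refine (isStringTrace_segment (fun h => hlevel ?_)
    axisParallel_framePt_height).union_segment (fun h => beamNear_ne_beamFar p (k + 1) ?_)
    axisParallel_framePt_along ?_
  · simpa using congr_fun h 1
  · simpa [beamNear] using congr_fun h (normalAxis (k + 1 + 1))
  · rintro q ⟨hriser, hbeam⟩
    rw [mem_segment_framePt_height] at hriser
    exact eq_framePt_iff.2 ⟨hriser.1, (mem_beam.1 hbeam).2.1, hriser.2.2⟩

lemma isStringTrace_stringTrace_zero (hn : 0 < n) (hlevel : beamLevel p (n - 1) ≠ beamLevel p 0) :
    IsStringTrace (stringTrace p n 0) (initialPt p 0) (finalPt p n 0) 3 := by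
  have hcoord : planeCoord p 0 ≠ planeCoord p n := (planeCoord_injective p).ne hn.ne
  have hthree : (3 : ℝ) ≠ planeCoord p (n - 1) :=
    ((abs_lt.1 (abs_planeCoord_lt_two p (n - 1))).2.trans (by norm_num)).ne'
  rw [stringTrace, detour, ← union_assoc, ← union_assoc]
  refine (((isStringTrace_segment (fun h => beamNear_ne_beamFar p 0 ?_)
    axisParallel_framePt_along).union_segment (fun h => hcoord ?_)
    axisParallel_framePt_normal ?_).union_segment (fun h => hlevel ?_)
    axisParallel_framePt_height ?_).union_segment (fun h => hthree ?_)
    axisParallel_framePt_along ?_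
  · simpa using congr_fun h (normalAxis 1)
  · simpa using congr_fun h (normalAxis 0)
  · rintro q ⟨h₀, h₁⟩
    rw [mem_segment_framePt_along] at h₀
    rw [mem_segment_framePt_normal] at h₁
    exact eq_framePt_iff.2 ⟨h₀.1, h₁.2⟩
  · simpa using (congr_fun h 1).symm
  · rintro q ⟨h₀ | h₁, h₂⟩ <;> rw [mem_segment_framePt_height] at h₂
    · rw [mem_segment_framePt_along] at h₀
      exact (hcoord (h₀.1.symm.trans h₂.1)).elim
    · rw [mem_segment_framePt_normal] at h₁
      exact eq_framePt_iff.2 ⟨h₂.1, h₁.2⟩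
  · simpa [beamFar] using congr_fun h (normalAxis 1)
  · rintro q ⟨(h₀ | h₁) | h₂, h₃⟩ <;> rw [mem_segment_framePt_along] at h₃
    · rw [mem_segment_framePt_along] at h₀
      exact (hcoord (h₀.1.symm.trans h₃.1)).elim
    · rw [mem_segment_framePt_normal] at h₁
      exact (hlevel (h₃.2.1.symm.trans h₁.2.1)).elim
    · rw [mem_segment_framePt_height] at h₂
      exact eq_framePt_iff.2 ⟨h₃.1, h₃.2.1, h₂.2.2⟩

namespace IsChordPairing

variable (h : IsChordPairing n p)
include h

lemma beamLevel_eq_beamLevel_iff : beamLevel p k = beamLevel p l ↔ l = k ∨ l = p k := by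
  have := h.involutive k
  have := h.involutive l
  rw [beamLevel, beamLevel, Nat.cast_inj]
  grind

lemma beamLevel_sub_one_ne_beamLevel_zero : beamLevel p (n - 1) ≠ beamLevel p 0 := by
  have := h.even
  have := h.pos
  rw [ne_comm, Ne, h.beamLevel_eq_beamLevel_iff]
  have := h.zero_ne
  grind

lemma beamLevel_ne_beamLevel_succ (k : ℕ) : beamLevel p k ≠ beamLevel p (k + 1) := by
  rw [Ne, h.beamLevel_eq_beamLevel_iff]
  have := h.ne_succ k
  omega

lemma isStringTrace_stringTrace (k : ℕ) :
    IsStringTrace (stringTrace p n k) (initialPt p k) (finalPt p n k) (if k = 0 then 3 else 1) := by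
  cases k with
  | zero => exact isStringTrace_stringTrace_zero h.pos h.beamLevel_sub_one_ne_beamLevel_zero
  | succ k => exact isStringTrace_stringTrace_succ (h.beamLevel_ne_beamLevel_succ k)

lemma beamFar_of_partner_lt (hlt : p l < l) : beamFar p l = planeCoord p (p l) := by
  obtain ⟨l, rfl⟩ := Nat.exists_eq_add_one_of_ne_zero (Nat.ne_zero_of_lt hlt)
  have : p (l + 1) ≠ l := fun heq => h.ne_succ l (by rw [← h.involutive (l + 1), heq])
  rw [beamFar, if_pos (by omega)]

lemma eq_finalPt_of_mem_beam_of_mem_beam (hkl : k < l) (hk : q ∈ beam p k) (hl : q ∈ beam p l) :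
    l = p k ∧ q = finalPt p n l := by
  obtain ⟨hcoord_k, hlevel_k, -⟩ := mem_beam.1 hk
  obtain ⟨hcoord_l, hlevel_l, -⟩ := mem_beam.1 hl
  have hpk : l = p k := by
    have := h.beamLevel_eq_beamLevel_iff.1 (hlevel_k.symm.trans hlevel_l)
    omega
  have hpl : p l = k := by rw [hpk, h.involutive]
  have hodd := h.odd_add k (by omega)
  refine ⟨hpk, ?_⟩
  obtain ⟨l, rfl⟩ := Nat.exists_eq_add_one_of_ne_zero (Nat.ne_zero_of_lt hkl)
  rw [finalPt, eq_framePt_iff, h.beamFar_of_partner_lt (by omega), hpl,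
    normalAxis_congr (k := l + 1 + 1) (l := k) (by grind)]
  exact ⟨hcoord_l, hlevel_l, hcoord_k⟩

lemma beam_partner_inter_nonempty (hk : k < p k) : (beam p k ∩ beam p (p k)).Nonempty := by
  have hodd := h.odd_add k hk.ne'
  have hkp : normalAxis k = normalAxis (p k + 1) := normalAxis_congr (by grind)
  have hpk : normalAxis (p k) = normalAxis (k + 1) := normalAxis_congr (by grind)
  refine ⟨framePt k (planeCoord p k) (beamLevel p k) (planeCoord p (p k)),
    mem_beam.2 ?_, mem_beam.2 ?_⟩
  · simpa using planeCoord_partner_mem_beamSpan hk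
  · have hlevel : beamLevel p k = beamLevel p (p k) := h.beamLevel_eq_beamLevel_iff.2 (.inr rfl)
    rw [beamSpan, h.beamFar_of_partner_lt (by rwa [h.involutive]), h.involutive, ← hkp, hpk]
    simp [hlevel]

lemma eq_finalPt_of_mem_detour (hl : l + 1 < n) (hdetour : q ∈ detour p n)
    (hq : q ∈ stringTrace p n (l + 1)) : l + 1 = n - 1 ∧ q = finalPt p n 0 := by
  have hz : q 2 < 3 := apply_normalAxis_lt_three_of_mem_stringTrace_succ hq 1
  obtain ⟨-, -, hz'⟩ | ⟨-, -, hz'⟩ | ⟨hx, hy, -⟩ := mem_detour.1 hdetour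
  · exact absurd hz' hz.ne
  · exact absurd hz' hz.ne
  have even_n : normalAxis n = 0 := normalAxis_congr (l := 0) h.even
  obtain hriser | hbeam := hq
  · have := eq_or_eq_succ_of_mem_riser (l := n) hriser (by rw [even_n, hx])
    omega
  obtain ⟨hcoord, hlevel, -⟩ := mem_beam.1 hbeam
  have hodd : Odd (l + 1) := by
    rw [← Nat.not_even_iff_odd]
    intro heven
    rw [normalAxis_congr (l := 0) heven] at hcoord
    exact hl.ne (planeCoord_injective p (hcoord.symm.trans hx))
  have hlast : l + 1 = n - 1 := by
    have := h.even
    have := h.odd_add (l + 1)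
    obtain heq | heq := h.beamLevel_eq_beamLevel_iff.1 (hlevel.symm.trans hy) <;> grind
  rw [normalAxis_congr (l := 0 + 1) (by grind), hlast] at hcoord
  exact ⟨hlast, eq_framePt_iff.2 ⟨hx, hy, hcoord⟩⟩

lemma finalPt_zero_mem_beam : finalPt p n 0 ∈ beam p (n - 1) := by
  have := h.even
  have := h.pos
  rw [finalPt, mem_beam, normalAxis_congr (k := n - 1) (l := 0 + 1) (by grind),
    normalAxis_congr (k := n - 1 + 1) (l := 0) (by grind)]
  have := planeCoord_succ_mem_beamSpan p (n - 1)
  rw [Nat.sub_add_cancel h.pos] at this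
  simpa using this

theorem chordAdj_and_endpoint_of_mem_stringTrace (hkl : k < l) (hl : l < n)
    (hqk : q ∈ stringTrace p n k) (hql : q ∈ stringTrace p n l) :
    ChordAdj n p k l ∧ (q = initialPt p l ∨ q = finalPt p n l ∨ q = finalPt p n k) := by
  obtain ⟨l, rfl⟩ := Nat.exists_eq_add_one_of_ne_zero (Nat.ne_zero_of_lt hkl)
  have of_mem_beam (hbeam : q ∈ beam p k) :
      ChordAdj n p k (l + 1) ∧ (q = initialPt p (l + 1) ∨ q = finalPt p n (l + 1)) := by
    obtain hriser | hbeam' := hql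
    · obtain rfl : k = l :=
        (eq_or_eq_succ_of_mem_riser hriser (mem_beam.1 hbeam).1).resolve_right hkl.ne
      exact ⟨.inl rfl, .inl (eq_initialPt_of_mem_riser_of_mem_beam hriser hbeam)⟩
    · obtain ⟨hp, hfinal⟩ := h.eq_finalPt_of_mem_beam_of_mem_beam (n := n) hkl hbeam hbeam'
      exact ⟨.inr (.inl hp), .inr hfinal⟩
  cases k with
  | zero =>
    obtain hbeam | hdetour := hqk
    · exact (of_mem_beam hbeam).imp_right (Or.imp_right .inl)
    · obtain ⟨hlast, hfinal⟩ := h.eq_finalPt_of_mem_detour hl hdetour hql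
      exact ⟨.inr (.inr ⟨rfl, hlast⟩), .inr (.inr hfinal)⟩
  | succ k =>
    obtain hriser | hbeam := hqk
    · have := eq_or_eq_succ_of_mem_riser hriser (apply_normalAxis_of_mem_stringTrace_succ hql)
      omega
    · exact (of_mem_beam hbeam).imp_right (Or.imp_right .inl)

theorem stringTrace_inter_stringTrace_nonempty (hkl : k < l) (hadj : ChordAdj n p k l) :
    (stringTrace p n k ∩ stringTrace p n l).Nonempty := by
  obtain rfl | rfl | ⟨rfl, rfl⟩ := hadj
  · exact ⟨initialPt p (k + 1), beam_subset_stringTrace k initialPt_succ_mem_beam,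
      .inl initialPt_succ_mem_riser⟩
  · exact (h.beam_partner_inter_nonempty hkl).mono
      (inter_subset_inter (beam_subset_stringTrace k) (beam_subset_stringTrace _))
  · exact ⟨finalPt p n 0, .inr (.inr (right_mem_segment _ _ _)),
      beam_subset_stringTrace _ h.finalPt_zero_mem_beam⟩

end IsChordPairing

end Strings

section ContactRep

lemma isStringContactRep_of_subsingleton {V : Type*} [Subsingleton V] (G : SimpleGraph V)
    (Ψ : V → AAString) : IsStringContactRep G Ψ :=
  ⟨fun u v huv => (huv (Subsingleton.elim u v)).elim,
    fun u v _ huv => (huv (Subsingleton.elim u v)).elim,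
    fun u v huv => (huv (Subsingleton.elim u v)).elim⟩

lemma isStringContactRep_of_lt {V α : Type*} [LinearOrder α] {G : SimpleGraph V}
    (hG : G.CliqueFree 3) {Ψ : V → AAString} {ι : V → α} (hι : Function.Injective ι)
    (hmem : ∀ u v, ι u < ι v →
      (Ψ u).carrier ∩ (Ψ v).carrier ⊆ (Ψ u).endpoints ∪ (Ψ v).endpoints)
    (hadj : ∀ u v, ι u < ι v → (((Ψ u).carrier ∩ (Ψ v).carrier).Nonempty ↔ G.Adj u v)) :
    IsStringContactRep G Ψ := by
  have hadj' (u v : V) (huv : u ≠ v) :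
      ((Ψ u).carrier ∩ (Ψ v).carrier).Nonempty ↔ G.Adj u v := by
    rcases (hι.ne huv).lt_or_gt with h | h
    · exact hadj u v h
    · rw [inter_comm, G.adj_comm]
      exact hadj v u h
  refine ⟨fun u v huv q hq => ?_, fun u v w huv huw hvw q ⟨hu, hv, hw⟩ => ?_, hadj'⟩
  · rcases (hι.ne huv).lt_or_gt with h | h
    · exact hmem u v h hq
    · exact union_comm _ _ ▸ hmem v u h hq.symm
  · classical
    exact hG {u, v, w} (SimpleGraph.is3Clique_triple_iff.2
      ⟨(hadj' u v huv).1 ⟨q, hu, hv⟩, (hadj' u w huw).1 ⟨q, hu, hw⟩,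
        (hadj' v w hvw).1 ⟨q, hv, hw⟩⟩)

theorem IsChordPairing.exists_isStringContactRep {V : Type*} {G : SimpleGraph V} {n : ℕ}
    {p : ℕ → ℕ} (h : IsChordPairing n p) (hG : G.CliqueFree 3) (ι : V ↪ ℕ) (hι : ∀ v, ι v < n)
    (hadj : ∀ u v, ι u < ι v → (G.Adj u v ↔ ChordAdj n p (ι u) (ι v))) :
    ∃ Ψ : V → AAString, IsStringContactRep G Ψ ∧ ∀ v, ι v ≠ 0 → (Ψ v).bends ≤ 1 := by
  choose S hcarrier hinitial hfinal hbends using h.isStringTrace_stringTrace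
  have endpoints_eq (k : ℕ) : (S k).endpoints = {initialPt p k, finalPt p n k} := by
    rw [AAString.endpoints, hinitial, hfinal]
  refine ⟨fun v => S (ι v), isStringContactRep_of_lt hG ι.injective ?_ ?_, fun v hv => ?_⟩
  · rintro u v huv q ⟨hu, hv⟩
    rw [hcarrier] at hu hv
    have := (h.chordAdj_and_endpoint_of_mem_stringTrace huv (hι v) hu hv).2
    simp only [endpoints_eq, mem_union, mem_insert_iff, mem_singleton_iff]
    tauto
  · intro u v huv
    rw [hcarrier, hcarrier, hadj u v huv]
    exact ⟨fun ⟨q, hu, hv⟩ => (h.chordAdj_and_endpoint_of_mem_stringTrace huv (hι v) hu hv).1,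
      h.stringTrace_inter_stringTrace_nonempty huv⟩
  · rw [hbends, if_neg hv]

end ContactRep

section HamiltonianCycle

lemma exists_involutive_adj_iff {V : Type*} {H : SimpleGraph V}
    (hH : ∀ u, (H.neighborSet u).Subsingleton) :
    ∃ p : V → V, Function.Involutive p ∧ ∀ u v, H.Adj u v ↔ u ≠ v ∧ p u = v := by
  classical
  have partner (u : V) : ∃ v, (∀ w, H.Adj u w ↔ u ≠ w ∧ v = w) := by
    by_cases h : ∃ v, H.Adj u v
    · obtain ⟨v, hv⟩ := h
      exact ⟨v, fun w => ⟨fun hw => ⟨hw.ne, hH u hv hw⟩, fun hw => hw.2 ▸ hv⟩⟩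
    · exact ⟨u, fun w => ⟨fun hw => (h ⟨w, hw⟩).elim, fun hw => (hw.1 hw.2).elim⟩⟩
  choose p hp using partner
  refine ⟨p, fun u => ?_, hp⟩
  by_cases hu : p u = u
  · rw [hu, hu]
  · exact ((hp _ _).1 ((hp u _).2 ⟨Ne.symm hu, rfl⟩).symm).2

variable {V : Type*} {G : SimpleGraph V} {a : V}

lemma odd_add_of_adj_getVert (hG : G.Colorable 2) {b : V} (w : G.Walk a b) {k l : ℕ}
    (hk : k ≤ w.length) (hl : l ≤ w.length) (hadj : G.Adj (w.getVert k) (w.getVert l)) :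
    Odd (k + l) := by
  have hwalk := SimpleGraph.two_colorable_iff_forall_loop_even.1 hG _
    (((w.take k).append hadj.toWalk).append (w.take l).reverse)
  simp only [SimpleGraph.Walk.length_append, SimpleGraph.Walk.length_reverse,
    SimpleGraph.Walk.take_length, SimpleGraph.Walk.length_cons, SimpleGraph.Walk.length_nil,
    min_eq_left hk, min_eq_left hl] at hwalk
  grind

lemma getVert_eq_getVert_iff {w : G.Walk a a} (hw : w.IsCycle) {k l : ℕ} (hk : k < w.length)
    (hl : l < w.length) : w.getVert k = w.getVert l ↔ k = l :=
  hw.getVert_injOn'.eq_iff (Nat.le_sub_one_of_lt hk) (Nat.le_sub_one_of_lt hl)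

lemma toSubgraph_adj_getVert_iff {w : G.Walk a a} (hw : w.IsCycle) {k l : ℕ} (hkl : k < l)
    (hl : l < w.length) : w.toSubgraph.Adj (w.getVert k) (w.getVert l) ↔
      l = k + 1 ∨ k = 0 ∧ l = w.length - 1 := by
  have succ_iff {i j : ℕ} (hi : i < w.length) (hj : j < w.length) :
      w.getVert (i + 1) = w.getVert j ↔ i + 1 = j ∨ i + 1 = w.length ∧ j = 0 := by
    obtain hlt | heq := (Nat.succ_le_of_lt hi).lt_or_eq
    · rw [getVert_eq_getVert_iff hw hlt hj]
      omega
    · have := getVert_eq_getVert_iff hw (k := 0) (by omega) hj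
      rw [SimpleGraph.Walk.getVert_zero] at this
      rw [Nat.succ_eq_add_one] at heq
      rw [heq, SimpleGraph.Walk.getVert_length, this]
      omega
  rw [SimpleGraph.Walk.toSubgraph_adj_iff]
  constructor
  · rintro ⟨i, hi, hilt⟩
    rw [Sym2.eq_iff, getVert_eq_getVert_iff hw hilt (hkl.trans hl), succ_iff hilt hl,
      getVert_eq_getVert_iff hw hilt hl, succ_iff hilt (hkl.trans hl)] at hi
    omega
  · rintro (rfl | ⟨rfl, rfl⟩)
    · exact ⟨k, rfl, hkl.trans hl⟩
    · refine ⟨w.length - 1, ?_, hl⟩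
      rw [Nat.sub_add_cancel (Nat.zero_lt_of_lt hl), SimpleGraph.Walk.getVert_length,
        SimpleGraph.Walk.getVert_zero, Sym2.eq_swap]

lemma exists_embedding_eq_iff_getVert_eq [DecidableEq V] {w : G.Walk a a}
    (hw : w.IsHamiltonianCycle) : ∃ ι : V ↪ ℕ, ∀ v k, ι v = k ↔ k < w.length ∧ w.getVert k = v := by
  have index (v : V) : ∃ k < w.length, w.getVert k = v := by
    obtain ⟨k, hk, hle⟩ := SimpleGraph.Walk.mem_support_iff_exists_getVert.1 (hw.mem_support v)
    obtain hlt | rfl := hle.lt_or_eq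
    · exact ⟨k, hlt, hk⟩
    · exact ⟨0, hw.three_le_length.trans_lt' (by simp), by simpa using hk⟩
  choose ι hlt hι using index
  refine ⟨⟨ι, fun u v huv => by rw [← hι u, huv, hι]⟩, fun v k => ⟨?_, ?_⟩⟩
  · rintro rfl
    exact ⟨hlt v, hι v⟩
  · rintro ⟨hk, rfl⟩
    exact (getVert_eq_getVert_iff hw.isCycle (hlt _) hk).1 (hι _)

lemma subsingleton_neighborSet_sdiff_toSubgraph [Fintype V] [DecidableRel G.Adj] {u : V}
    (hdeg : G.degree u ≤ 3) {w : G.Walk a a} (hw : w.IsCycle) (hu : u ∈ w.support) :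
    ((G \ w.toSubgraph.spanningCoe).neighborSet u).Subsingleton := by
  intro v hv v' hv'
  by_contra hne
  have hsub : w.toSubgraph.neighborSet u ∪ {v, v'} ⊆ G.neighborSet u :=
    union_subset (w.toSubgraph.neighborSet_subset u)
      (insert_subset hv.1 (singleton_subset_iff.2 hv'.1))
  have hdisj : Disjoint (w.toSubgraph.neighborSet u) {v, v'} := by
    rw [disjoint_insert_right, disjoint_singleton_right]
    exact ⟨hv.2, hv'.2⟩
  have hcard := ncard_le_ncard hsub (toFinite _)
  rw [ncard_union_eq hdisj (toFinite _) (toFinite _), hw.ncard_neighborSet_toSubgraph_eq_two hu,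
    ncard_pair hne, ncard_eq_toFinset_card', toFinset_card, G.card_neighborSet_eq_degree] at hcard
  omega

lemma exists_involutive_map_chord_adj_iff [Fintype V] [DecidableEq V] [DecidableRel G.Adj]
    (hdeg : ∀ v, G.degree v ≤ 3) {w : G.Walk a a} (hw : w.IsHamiltonianCycle) {α : Type*}
    (ι : V ↪ α) : ∃ p : α → α, Function.Involutive p ∧
      ∀ k l, ((G \ w.toSubgraph.spanningCoe).map ι).Adj k l ↔ k ≠ l ∧ p k = l := by
  refine exists_involutive_adj_iff fun k l hl l' hl' => ?_
  obtain ⟨u, v, hv, rfl, rfl⟩ := (SimpleGraph.map_adj _ _ _ _).1 hl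
  obtain ⟨u', v', hv', hu, rfl⟩ := (SimpleGraph.map_adj _ _ _ _).1 hl'
  rw [ι.injective hu] at hv'
  rw [subsingleton_neighborSet_sdiff_toSubgraph (hdeg u) hw.isCycle (hw.mem_support u) hv hv']

theorem exists_isChordPairing [Fintype V] [DecidableEq V] [DecidableRel G.Adj]
    (hdeg : ∀ v, G.degree v ≤ 3) (hG : G.Colorable 2) {w : G.Walk a a}
    (hw : w.IsHamiltonianCycle) {ι : V ↪ ℕ}
    (hι : ∀ v k, ι v = k ↔ k < w.length ∧ w.getVert k = v) :
    ∃ p, IsChordPairing w.length p ∧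
      ∀ u v, ι u < ι v → (G.Adj u v ↔ ChordAdj w.length p (ι u) (ι v)) := by
  have lt_length (v : V) : ι v < w.length := ((hι v _).1 rfl).1
  have getVert_ι (v : V) : w.getVert (ι v) = v := ((hι v _).1 rfl).2
  have cycle_adj_iff {u v : V} (huv : ι u < ι v) :
      w.toSubgraph.Adj u v ↔ ι v = ι u + 1 ∨ ι u = 0 ∧ ι v = w.length - 1 := by
    simpa only [getVert_ι] using toSubgraph_adj_getVert_iff hw.isCycle huv (lt_length v)
  obtain ⟨p, hinv, hp⟩ := exists_involutive_map_chord_adj_iff hdeg hw ι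
  have chord_of_ne {k : ℕ} (hk : p k ≠ k) :
      ∃ u v, (G.Adj u v ∧ ¬ w.toSubgraph.Adj u v) ∧ ι u = k ∧ ι v = p k :=
    (SimpleGraph.map_adj _ _ _ _).1 ((hp k (p k)).2 ⟨hk.symm, rfl⟩)
  refine ⟨p, ⟨?_, ?_, hinv, fun k hk => ?_, fun k hk => ?_, fun h0 => ?_⟩, fun u v huv => ?_⟩
  · exact SimpleGraph.two_colorable_iff_forall_loop_even.1 hG a w
  · exact hw.three_le_length.trans_lt' (by simp)
  · obtain ⟨u, v, ⟨huv, -⟩, hu, hv⟩ := chord_of_ne hk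
    rw [← hv, ← hu]
    rw [← getVert_ι u, ← getVert_ι v] at huv
    exact odd_add_of_adj_getVert hG w (lt_length u).le (lt_length v).le huv
  · obtain ⟨u, v, ⟨-, hcycle⟩, rfl, hv⟩ := chord_of_ne (k := k) (by omega)
    exact hcycle ((cycle_adj_iff (by omega)).2 (.inl (hv.trans hk)))
  · have := hw.three_le_length
    obtain ⟨u, v, ⟨-, hcycle⟩, hu, hv⟩ := chord_of_ne (k := 0) (by omega)
    exact hcycle ((cycle_adj_iff (by omega)).2 (.inr ⟨hu, hv.trans h0⟩))
  · have chord_adj_iff : G.Adj u v ∧ ¬ w.toSubgraph.Adj u v ↔ ι u ≠ ι v ∧ p (ι u) = ι v := by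
      rw [← hp, SimpleGraph.map_adj_apply]
      rfl
    have := w.toSubgraph.adj_sub (v := u) (w := v)
    have := cycle_adj_iff huv
    rw [ChordAdj]
    grind

end HamiltonianCycle

theorem cubic_hamiltonian_bipartite_LContactRep_general {V : Type*} [Fintype V] [DecidableEq V]
    (G : SimpleGraph V) [DecidableRel G.Adj]
    (hdeg : ∀ v, G.degree v ≤ 3) (hham : G.IsHamiltonian) (hbip : G.Colorable 2) :
    ∃ Ψ : V → AAString, IsStringContactRep G Ψ ∧
      ∃ v₀ : V, ∀ v : V, v ≠ v₀ → (Ψ v).bends ≤ 1 := by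
  by_cases hcard : Fintype.card V = 1
  · obtain ⟨_⟩ := Fintype.card_eq_one_iff_nonempty_unique.1 hcard
    obtain ⟨S, -⟩ := isStringTrace_segment (a := 0) (b := Pi.single 0 1) (by simp [eq_comm])
      ⟨0, by simp +contextual⟩
    exact ⟨fun _ => S, isStringContactRep_of_subsingleton G _, default,
      fun v hv => (hv (Unique.eq_default v)).elim⟩
  · obtain ⟨a, w, hw⟩ := hham hcard
    obtain ⟨ι, hι⟩ := exists_embedding_eq_iff_getVert_eq hw
    obtain ⟨p, hp, hadj⟩ := exists_isChordPairing hdeg hbip hw hι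
    obtain ⟨Ψ, hΨ, hbends⟩ := hp.exists_isStringContactRep (hbip.cliqueFree (by norm_num)) ι
      (fun v => ((hι v _).1 rfl).1) hadj
    exact ⟨Ψ, hΨ, a, fun v hv => hbends v fun hv0 => hv <| by
      simpa using ((hι v 0).1 hv0).2.symm⟩

/-- Every finite 3-regular Hamiltonian bipartite simple graph admits a string contact
representation in ℝ³ in which all strings except at most one are `B₁`-strings
(`L`-shapes). -/
theorem cubic_hamiltonian_bipartite_LContactRep {V : Type*} [Fintype V] [DecidableEq V]
    (G : SimpleGraph V) [DecidableRel G.Adj]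
    (hreg : G.IsRegularOfDegree 3) (hham : G.IsHamiltonian) (hbip : G.Colorable 2) :
    ∃ Ψ : V → AAString, IsStringContactRep G Ψ ∧
      ∃ v₀ : V, ∀ v : V, v ≠ v₀ → (Ψ v).bends ≤ 1 :=
  cubic_hamiltonian_bipartite_LContactRep_general G (fun v => (hreg.degree_eq v).le) hham hbip
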